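/- Fix ℏ > 0 and n ≥ 1, and fix parameters γ_{n+1} = (γ_{n+1,1},…,γ_{n+1,n+1}) ∈ ℂ^{n+1}. Let γ_n = (γ_{n1},…,γ_{nn}) be pairwise distinct complex numbers such that for all 1 ≤ k ≤ n, 1 ≤ m ≤ n+1, the number (γ_{nk} − γ_{n+1,m})/(iℏ) + 1/2 is not an integer. Then for every λ ∈ ℂ and every function f of γ_n: (ℬ_n(λ)(s_n·f))(γ) = s_n(γ_n,γ_{n+1})·(B_n(λ)f)(γ), where s_n·f denotes the pointwise product γ ↦ s_n(γ_n,γ_{n+1})·f(γ). That is, the Gelfand–Zetlin operator ℬ_n(λ) is conjugate by multiplication by s_n to the QISM operator B_n(λ): B_n(λ) = s_n^{−1}∘ℬ_n(λ)∘s_n. -/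

import Mathlib

open Finset

noncomputable section

/-- The row of Gelfand–Zetlin variables `γ_n = (γ_{n1}, …, γ_{nn})` (indexed by `ℕ`,
relevant for indices `1, …, n`). -/
abbrev Row := ℕ → ℂ

/-- Shift of the single variable `γ_{nj}` by `c`. -/
def rowShift (c : ℂ) (j : ℕ) (g : Row) : Row := fun k => if k = j then g k + c else g k

/-- `ℏ^z := exp(z log ℏ)`. -/
def hpow (ℏ : ℝ) (z : ℂ) : ℂ := Complex.exp (z * (Real.log ℏ : ℂ))

/-- The Gelfand–Zetlin operator `ℬ_n(λ)`, with fixed parameters `t = γ_{n+1}`. -/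
def Bop (ℏ : ℝ) (n : ℕ) (t : Row) (lam : ℂ) (f : Row → ℂ) (g : Row) : ℂ :=
  ∑ j ∈ Icc 1 n,
    (∏ s ∈ (Icc 1 n).erase j, (lam - g s) / (g j - g s)) *
      (∏ r ∈ Icc 1 (n + 1), (g j - t r - Complex.I * ℏ / 2)) *
      f (rowShift (-(Complex.I * ℏ)) j g)

/-- The QISM operator `B_n(λ) = i^{1+n}·Σ_j ∏_{s≠j}((λ−γ_{ns})/(γ_{nj}−γ_{ns}))·e^{−iℏ∂_{γ_{nj}}}`. -/
def BopQISM (ℏ : ℝ) (n : ℕ) (lam : ℂ) (f : Row → ℂ) (g : Row) : ℂ :=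
  Complex.I ^ (1 + n) * ∑ j ∈ Icc 1 n,
    (∏ s ∈ (Icc 1 n).erase j, (lam - g s) / (g j - g s)) *
      f (rowShift (-(Complex.I * ℏ)) j g)

/-- The conjugating factor `s_n(γ_n, γ_{n+1})`, with `t = γ_{n+1}`. -/
def sFun (ℏ : ℝ) (n : ℕ) (t : Row) (g : Row) : ℂ :=
  ∏ k ∈ Icc 1 n, ∏ m ∈ Icc 1 (n + 1),
    hpow ℏ ((g k - t m) / (Complex.I * ℏ) + 1 / 2) *
      Complex.Gamma ((g k - t m) / (Complex.I * ℏ) + 1 / 2)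

/-!
Each factor of `s_n` is `Φ(z) = ℏ^z Γ(z)` at `z = (γ_{nj} - γ_{n+1,r})/(iℏ) + 1/2`, and `Φ`
satisfies `Φ(z + 1) = ℏ z Φ(z)`. Shifting `γ_{nj}` by `-iℏ` lowers `z` by one, and
`γ_{nj} - γ_{n+1,r} - iℏ/2 = iℏ(z - 1)`, so the polynomial coefficient of `ℬ_n(λ)` absorbs exactly
the change of the `n + 1` factors of `s_n` involving `γ_{nj}`, leaving one `i` from each of them.
-/

theorem hpow_add_one {ℏ : ℝ} (hℏ : 0 < ℏ) (z : ℂ) : hpow ℏ (z + 1) = ℏ * hpow ℏ z := by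
  rw [hpow, hpow, add_mul, one_mul, Complex.exp_add, ← Complex.ofReal_exp, Real.exp_log hℏ,
    mul_comm]

/-- The rescaled Gamma function `ℏ^z Γ(z)`, whose values are the factors of `sFun`. -/
def hGamma (ℏ : ℝ) (z : ℂ) : ℂ := hpow ℏ z * Complex.Gamma z

theorem hGamma_add_one {ℏ : ℝ} (hℏ : 0 < ℏ) {z : ℂ} (hz : z ≠ 0) :
    hGamma ℏ (z + 1) = ℏ * z * hGamma ℏ z := by
  rw [hGamma, hGamma, hpow_add_one hℏ, Complex.Gamma_add_one z hz]
  ring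

theorem sub_mul_hGamma_shift {ℏ : ℝ} (hℏ : 0 < ℏ) {a : ℂ} (ha : a ≠ Complex.I * ℏ / 2) :
    (a - Complex.I * ℏ / 2) * hGamma ℏ ((a - Complex.I * ℏ) / (Complex.I * ℏ) + 1 / 2) =
      Complex.I * hGamma ℏ (a / (Complex.I * ℏ) + 1 / 2) := by
  have hIℏ : Complex.I * (ℏ : ℂ) ≠ 0 :=
    mul_ne_zero Complex.I_ne_zero (Complex.ofReal_ne_zero.mpr hℏ.ne')
  set z : ℂ := (a - Complex.I * ℏ) / (Complex.I * ℏ) + 1 / 2 with hz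
  have coeff_eq : a - Complex.I * ℏ / 2 = Complex.I * ℏ * z := by
    rw [hz, mul_add, mul_div_cancel₀ _ hIℏ]
    ring
  have arg_eq : a / (Complex.I * ℏ) + 1 / 2 = z + 1 := by
    rw [hz, sub_div, div_self hIℏ]
    ring
  have z_ne_zero : z ≠ 0 := right_ne_zero_of_mul (coeff_eq ▸ sub_ne_zero.mpr ha)
  rw [coeff_eq, arg_eq, hGamma_add_one hℏ z_ne_zero]
  ring

theorem mul_prod_comp_rowShift {M : Type*} [CommMonoid M] (F : ℂ → M) {S : Finset ℕ} {j : ℕ}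
    (hj : j ∈ S) {g : Row} {c : ℂ} {a b : M} (hab : a * F (g j + c) = b * F (g j)) :
    a * ∏ k ∈ S, F (rowShift c j g k) = b * ∏ k ∈ S, F (g k) := by
  have shift_self : rowShift c j g j = g j + c := if_pos rfl
  have prod_erase_eq : ∏ k ∈ S.erase j, F (rowShift c j g k) = ∏ k ∈ S.erase j, F (g k) :=
    prod_congr rfl fun k hk => congrArg F (if_neg (ne_of_mem_erase hk))
  rw [← mul_prod_erase S _ hj, ← mul_prod_erase S (fun k => F (g k)) hj, shift_self,
    prod_erase_eq, ← mul_assoc, hab, mul_assoc]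

theorem prod_sub_mul_sFun_rowShift {ℏ : ℝ} (hℏ : 0 < ℏ) {n : ℕ} {t g : Row} {j : ℕ}
    (hj : j ∈ Icc 1 n) (hjt : ∀ r ∈ Icc 1 (n + 1), g j - t r ≠ Complex.I * ℏ / 2) :
    (∏ r ∈ Icc 1 (n + 1), (g j - t r - Complex.I * ℏ / 2)) *
        sFun ℏ n t (rowShift (-(Complex.I * ℏ)) j g) =
      Complex.I ^ (1 + n) * sFun ℏ n t g := by
  refine mul_prod_comp_rowShift
    (fun x => ∏ r ∈ Icc 1 (n + 1), hGamma ℏ ((x - t r) / (Complex.I * ℏ) + 1 / 2)) hj ?_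
  have I_pow_eq : Complex.I ^ (1 + n) = ∏ _r ∈ Icc 1 (n + 1), Complex.I := by
    rw [prod_const, Nat.card_Icc, Nat.add_sub_cancel, add_comm]
  rw [I_pow_eq, ← prod_mul_distrib, ← prod_mul_distrib]
  refine prod_congr rfl fun r hr => ?_
  have shift_sub : g j + -(Complex.I * ℏ) - t r = g j - t r - Complex.I * ℏ := by ring
  rw [shift_sub, sub_mul_hGamma_shift hℏ (hjt r hr)]

/-- the Gelfand–Zetlin operator `ℬ_n(λ)` is conjugate, by
multiplication by `s_n`, to the QISM operator `B_n(λ)`: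
`ℬ_n(λ)(s_n·f) = s_n·(B_n(λ)f)` pointwise. -/
theorem B_conjugate_to_QISM (ℏ : ℝ) (hℏ : 0 < ℏ) (n : ℕ) (hn : 1 ≤ n)
    (t : Row) (g : Row)
    (hg : ∀ j ∈ Icc 1 n, ∀ s ∈ Icc 1 n, j ≠ s → g j ≠ g s)
    (ht : ∀ k ∈ Icc 1 n, ∀ m ∈ Icc 1 (n + 1),
      ∀ z : ℤ, (g k - t m) / (Complex.I * ℏ) + 1 / 2 ≠ (z : ℂ))
    (lam : ℂ) (f : Row → ℂ) :
    Bop ℏ n t lam (fun h => sFun ℏ n t h * f h) g =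
      sFun ℏ n t g * BopQISM ℏ n lam f g := by
  have hℏ₀ : (ℏ : ℂ) ≠ 0 := Complex.ofReal_ne_zero.mpr hℏ.ne'
  rw [Bop, BopQISM, mul_sum, mul_sum]
  refine sum_congr rfl fun j hj => ?_
  have hjt : ∀ r ∈ Icc 1 (n + 1), g j - t r ≠ Complex.I * ℏ / 2 := fun r hr h_eq => by
    refine ht j hj r hr 1 ?_
    rw [h_eq, div_right_comm, div_self (mul_ne_zero Complex.I_ne_zero hℏ₀)]
    norm_num
  linear_combination (∏ s ∈ (Icc 1 n).erase j, (lam - g s) / (g j - g s)) *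
    f (rowShift (-(Complex.I * ℏ)) j g) * prod_sub_mul_sFun_rowShift hℏ hj hjt
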